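/- For all integers r, s, r', s' ≥ 1 with r + s = r' + s', and all n ≥ r + s, the cardinalities |D_n^{r,s}| and |D_n^{r',s'}| are equal; that is, |D_n^{r,s}| depends only on the sum r + s and not on the individual values of r and s. -/

import Mathlib

/-- A Dyck path of semilength `n`, encoded as a word on `Bool`
(`true` = up step `u`, `false` = down step `d`). -/
def IsDyckWord (n : ℕ) (w : List Bool) : Prop :=
  w.length = 2 * n ∧ w.count true = n ∧ w.count false = n ∧
    ∀ p : List Bool, p <+: w → p.count false ≤ p.count true

/-- The (0-based) indices of the up steps of `w`. -/
def upIdxs (w : List Bool) : List ℕ := w.findIdxs (· == true)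

/-- The (0-based) indices of the down steps of `w`. -/
def downIdxs (w : List Bool) : List ℕ := w.findIdxs (· == false)

/-- `rStat w i` is the number of `d`'s strictly between the `i`-th and the
`(i+1)`-st `u` of `w` (with `i` 1-indexed). -/
def rStat (w : List Bool) (i : ℕ) : ℕ :=
  ((w.take ((upIdxs w).getD i 0)).drop ((upIdxs w).getD (i - 1) 0 + 1)).count false

/-- `sStat w i` is the number of `u`'s strictly between the `i`-th and the
`(i+1)`-st `d` of `w` (with `i` 1-indexed). -/
def sStat (w : List Bool) (i : ℕ) : ℕ :=
  ((w.take ((downIdxs w).getD i 0)).drop ((downIdxs w).getD (i - 1) 0 + 1)).count true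

/-- The statistic `L(D) = ∏_{i=1}^{n-1} C(r_i + s_i, r_i)` of a Dyck path of semilength `n`. -/
def LStat (n : ℕ) (w : List Bool) : ℕ :=
  ∏ i ∈ Finset.Icc 1 (n - 1), Nat.choose (rStat w i + sStat w i) (rStat w i)

/-- `dyckL n k` = the set `𝒟ₙᵏ` of Dyck paths of semilength `n` with `L(D) = k`. -/
def dyckL (n k : ℕ) : Set (List Bool) := {w | IsDyckWord n w ∧ LStat n w = k}

/-- A Motzkin path, encoded as a word on `Option Bool`
(`some true` = up, `some false` = down, `none` = horizontal). -/
def IsMotzkinWord (w : List (Option Bool)) : Prop :=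
  w.count (some false) = w.count (some true) ∧
    ∀ p : List (Option Bool), p <+: w → p.count (some false) ≤ p.count (some true)

/-- `motzkin n` = the `n`-th Motzkin number `Mₙ`, the number of Motzkin paths of length `n`. -/
noncomputable def motzkin (n : ℕ) : ℕ :=
  {w : List (Option Bool) | w.length = n ∧ IsMotzkinWord w}.ncard

/-- The Motzkin ballot number `T_{n,k}`: the number of Motzkin paths of length `n`
whose first down step is in position `k` (1-indexed); by convention `T_{k-1,k} = 1`,
counting the path of `k-1` horizontal steps. -/
noncomputable def motzkinBallot (n k : ℕ) : ℕ :=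
  if n + 1 = k then 1
  else
    {w : List (Option Bool) | w.length = n ∧ IsMotzkinWord w ∧
      w.getD (k - 1) none = some false ∧ ∀ j < k - 1, w.getD j none ≠ some false}.ncard

/-- Motzkin numbers with integer index: `Mᵢ = 0` for `i < 0`. -/
noncomputable def motzkinZ (i : ℤ) : ℤ := if 0 ≤ i then (motzkin i.toNat : ℤ) else 0

/-- Motzkin ballot numbers with integer first index: `T_{n,k} = 0` for `n < 0`. -/
noncomputable def motzkinBallotZ (n : ℤ) (k : ℕ) : ℤ :=
  if 0 ≤ n then (motzkinBallot n.toNat k : ℤ) else 0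

/-- The set of returns of a Dyck path `w` of semilength `n`:
indices `1 ≤ k ≤ n` such that the path touches the `x`-axis after `2k` steps. -/
def returns (n : ℕ) (w : List Bool) : Finset ℕ :=
  (Finset.Icc 1 n).filter fun k => (w.take (2 * k)).count false = (w.take (2 * k)).count true

/-- `dyckRS n r s` = the set `𝒟ₙ^{r,s}` of Dyck paths of semilength `n` having exactly one
index `i` with `rᵢ > 0` and `sᵢ > 0`, and such that at that index `rᵢ = r` and `sᵢ = s`. -/
def dyckRS (n r s : ℕ) : Set (List Bool) :=
  {w | IsDyckWord n w ∧ ∃ i ∈ Finset.Icc 1 (n - 1),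
    (0 < rStat w i ∧ 0 < sStat w i) ∧ rStat w i = r ∧ sStat w i = s ∧
      ∀ j ∈ Finset.Icc 1 (n - 1), 0 < rStat w j ∧ 0 < sStat w j → j = i}

/-- `twoStars n w k₁ k₂` says that `k₁ < k₂` are exactly the two indices `i` of `w`
with `rᵢ > 0` and `sᵢ > 0`. -/
def twoStars (n : ℕ) (w : List Bool) (k₁ k₂ : ℕ) : Prop :=
  k₁ ∈ Finset.Icc 1 (n - 1) ∧ k₂ ∈ Finset.Icc 1 (n - 1) ∧ k₁ < k₂ ∧
    (0 < rStat w k₁ ∧ 0 < sStat w k₁) ∧ (0 < rStat w k₂ ∧ 0 < sStat w k₂) ∧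
    ∀ j ∈ Finset.Icc 1 (n - 1), 0 < rStat w j ∧ 0 < sStat w j → j = k₁ ∨ j = k₂

/-- `xStat w k` = the number of indices `i < k` with `rᵢ = 0` and `sᵢ > 0`. -/
def xStat (w : List Bool) (k : ℕ) : ℕ :=
  ((Finset.Ico 1 k).filter fun i => rStat w i = 0 ∧ 0 < sStat w i).card

/-- `yStat w k` = the number of indices `i < k` with `rᵢ > 0` and `sᵢ = 0`. -/
def yStat (w : List Bool) (k : ℕ) : ℕ :=
  ((Finset.Ico 1 k).filter fun i => 0 < rStat w i ∧ sStat w i = 0).card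

/-- The generating function `m(x) = Σ Mₙ xⁿ` of the Motzkin numbers, over `ℚ`. -/
noncomputable def motzkinGF : PowerSeries ℚ := PowerSeries.mk fun n => (motzkin n : ℚ)

/-!
Record a Dyck path `D` of semilength `n` by the `n - 1` steps `(rᵢ(D) > 0, sᵢ(D) > 0)`. Reading
`(false, true)` as an up step, `(true, false)` as a down step and the two other steps as horizontal
steps of different colours, this is a bijection onto the bicoloured Motzkin paths of length `n - 1`
from `0` to `0`. A positive `rᵢ` is the length of a run of `d`'s, that is, the distance between two
consecutive indices `j` with `sⱼ > 0`, and symmetrically for a positive `sᵢ`.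

A path in `𝒟ₙ^{r,s}` is cut at its unique step `(true, true)`, at height `h`, and the left part is
read backwards. The result is a pair of paths from `h` to `0` without the step `(true, true)`, in
which the `h`-th and the `(h + 1)`-st down step are separated by `r - 1` steps in the first path and
by `s - 1` steps in the second one. Lengthening such a gap by one inserts a horizontal step, or an
up step with the excursion following it and the matching down step, and so multiplies the generating
function by `X (1 + X C)`, where `C` counts the paths from `0` to `0` without the step
`(true, true)`. Hence the generating function of `𝒟ₙ^{r,s}` is `(X (1 + X C)) ^ (r + s - 2)` times
a series which depends neither on `r` nor on `s`.
-/

/-! ### Generating functions of sets of words -/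

section WordGF

open PowerSeries

variable {α : Type*}

/-- The generating function of a set of words over a finite alphabet, counted by length. -/
noncomputable def wordGF (L : Set (List α)) : ℤ⟦X⟧ :=
  .mk fun l => ({w ∈ L | w.length = l}.ncard : ℤ)

lemma coeff_wordGF (L : Set (List α)) (l : ℕ) :
    coeff l (wordGF L) = ({w ∈ L | w.length = l}.ncard : ℤ) :=
  coeff_mk _ _

lemma finite_setOf_mem_and_length_eq [Finite α] (L : Set (List α)) (l : ℕ) :
    {w ∈ L | w.length = l}.Finite :=
  (List.finite_length_eq α l).subset fun _ hw => hw.2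

lemma finite_setOf_mem_prod_and_length_add_eq [Finite α] (L K : Set (List α)) (n : ℕ) :
    {p ∈ L ×ˢ K | p.1.length + p.2.length = n}.Finite :=
  ((List.finite_length_le α n).prod (List.finite_length_le α n)).subset fun _ hp =>
    ⟨Nat.le.intro hp.2, Nat.le.intro ((Nat.add_comm _ _).trans hp.2)⟩

lemma wordGF_empty : wordGF (∅ : Set (List α)) = 0 := by
  ext l
  simp [coeff_wordGF]

lemma ncard_setOf_length_eq_succ [Fintype α] (L : Set (List α)) (l : ℕ) :
    {w ∈ L | w.length = l + 1}.ncard = ∑ x, {w | x :: w ∈ L ∧ w.length = l}.ncard := by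
  have hfin (x : α) : {w | x :: w ∈ L ∧ w.length = l}.Finite :=
    finite_setOf_mem_and_length_eq {w | x :: w ∈ L} l
  have hunion : {w ∈ L | w.length = l + 1} =
      ⋃ x, List.cons x '' {w | x :: w ∈ L ∧ w.length = l} := by
    ext w
    cases w <;> simp
  rw [hunion, Set.ncard_iUnion_of_finite (fun x => (hfin x).image _), finsum_eq_sum_of_fintype]
  · exact Finset.sum_congr rfl fun x _ => Set.ncard_image_of_injective _ List.cons_injective
  · intro x y hxy
    rw [Function.onFun, Set.disjoint_left]
    rintro _ ⟨u, -, rfl⟩ ⟨v, -, h⟩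
    exact hxy (List.cons.inj h).1.symm

open Classical in
lemma wordGF_eq_ite_add [Fintype α] (L : Set (List α)) :
    wordGF L = (if [] ∈ L then 1 else 0) + X * ∑ x, wordGF {w | x :: w ∈ L} := by
  ext l
  rcases l with _ | l
  · have hnil : {w ∈ L | w.length = 0} = if [] ∈ L then {[]} else ∅ := by
      ext w
      grind [List.length_eq_zero_iff]
    rw [coeff_wordGF, hnil]
    split_ifs <;> simp
  · have hone : coeff (l + 1) (if [] ∈ L then 1 else 0 : ℤ⟦X⟧) = 0 := by
      split_ifs <;> simp [coeff_one]
    rw [coeff_wordGF, ncard_setOf_length_eq_succ, map_add, hone, coeff_succ_X_mul, map_sum]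
    simp [coeff_wordGF]

open Finset.HasAntidiagonal in
lemma coeff_wordGF_mul [Finite α] (L K : Set (List α)) (n : ℕ) :
    coeff n (wordGF L * wordGF K) =
      ({p ∈ L ×ˢ K | p.1.length + p.2.length = n}.ncard : ℤ) := by
  have hunion : {p ∈ L ×ˢ K | p.1.length + p.2.length = n} =
      ⋃ ij ∈ (antidiagonal n : Set (ℕ × ℕ)),
        {w ∈ L | w.length = ij.1} ×ˢ {w ∈ K | w.length = ij.2} := by
    ext p
    simp only [Set.mem_ofPred_eq, Set.mem_prod, Set.mem_iUnion₂, Finset.mem_coe,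
      mem_antidiagonal, Prod.exists]
    grind
  rw [hunion, (antidiagonal n).finite_toSet.ncard_biUnion, finsum_mem_coe_finset, coeff_mul]
  · simp [coeff_wordGF, Set.ncard_prod]
  · exact fun ij _ => (finite_setOf_mem_and_length_eq L _).prod
      (finite_setOf_mem_and_length_eq K _)
  · intro ij _ ij' _ hne
    rw [Function.onFun, Set.disjoint_left]
    rintro p ⟨⟨-, hfst⟩, -, hsnd⟩ ⟨⟨-, hfst'⟩, -, hsnd'⟩
    exact hne (Prod.ext (hfst.symm.trans hfst') (hsnd.symm.trans hsnd'))

lemma eq_zero_of_eq_X_mul_mem_span {ι R : Type*} [CommRing R] {f : ι → R⟦X⟧}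
    (h : ∀ i, ∃ g ∈ Ideal.span (Set.range f), f i = X * g) (i : ι) : f i = 0 := by
  have hdvd : ∀ n, ∀ i, X ^ n ∣ f i := by
    intro n
    induction n with
    | zero => simp
    | succ n ih =>
      intro i
      obtain ⟨g, hg, hi⟩ := h i
      have hle : Ideal.span (Set.range f) ≤ Ideal.span {X ^ n} := by
        rw [Ideal.span_le]
        rintro _ ⟨j, rfl⟩
        exact Ideal.mem_span_singleton.2 (ih j)
      rw [hi, pow_succ']
      exact mul_dvd_mul_left X (Ideal.mem_span_singleton.1 (hle hg))
  ext n
  exact X_pow_dvd_iff.1 (hdvd (n + 1) i) n n.lt_succ_self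

end WordGF

/-! ### Motzkin paths with a prescribed gap -/

/-- Steps of a bicoloured Motzkin path. The step `(x, y)` changes the height by `y - x`, so that
`(false, true)` goes up, `(true, false)` goes down, and `(false, false)`, `(true, true)` are the
two colours of horizontal steps. -/
abbrev Step : Type := Bool × Bool

/-- `IsMotzkinPath t w t'` says that `w` leads from height `t` to height `t'` without going below
height `0`. The height `k` after the first step is determined by an equation without truncated
subtraction. -/
def IsMotzkinPath : ℕ → List Step → ℕ → Prop
  | t, [], t' => t = t'
  | t, x :: w, t' => ∃ k, t + x.2.toNat = k + x.1.toNat ∧ IsMotzkinPath k w t'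

/-- The number of letters strictly between the `k`-th and the `(k + 1)`-st occurrence of `c`
(counted from `1`), where the word is bordered by one more `c` on either side, and `0` if there is
no such gap. -/
def gapLen {α : Type*} [DecidableEq α] (c : α) : List α → ℕ → ℕ
  | [], _ => 0
  | x :: w, 0 => if x = c then 0 else gapLen c w 0 + 1
  | x :: w, k + 1 => if x = c then gapLen c w k else gapLen c w (k + 1)

/-- The paths from height `t` to height `0` without the step `(true, true)`. -/
def descents (t : ℕ) : Set (List Step) :=
  {w | (true, true) ∉ w ∧ IsMotzkinPath t w 0}

/-- The paths in `descents t` having `g` steps between the `h`-th and the `(h + 1)`-st down step. -/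
def gapDescents (t h g : ℕ) : Set (List Step) :=
  {w ∈ descents t | gapLen true (w.map Prod.fst) h = g}

section DescentGF

open PowerSeries

lemma wordGF_descents_zero :
    wordGF (descents 0) = 1 + X * (wordGF (descents 1) + wordGF (descents 0)) := by
  refine (wordGF_eq_ite_add _).trans ?_
  simp [descents, IsMotzkinPath, Fintype.sum_prod_type, wordGF_empty]

lemma wordGF_descents_succ (t : ℕ) :
    wordGF (descents (t + 1)) = X * (wordGF (descents t) + wordGF (descents (t + 2)) +
      wordGF (descents (t + 1))) := by
  refine (wordGF_eq_ite_add _).trans ?_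
  simp [descents, IsMotzkinPath, Fintype.sum_prod_type, wordGF_empty, add_assoc]

lemma wordGF_gapDescents_zero_zero_zero : wordGF (gapDescents 0 0 0) = 1 := by
  rw [wordGF_eq_ite_add]
  simp [gapDescents, descents, IsMotzkinPath, gapLen, Fintype.sum_prod_type, wordGF_empty]

lemma wordGF_gapDescents_succ_zero_zero (t : ℕ) :
    wordGF (gapDescents (t + 1) 0 0) = X * wordGF (descents t) := by
  rw [wordGF_eq_ite_add]
  simp [gapDescents, descents, IsMotzkinPath, gapLen, Fintype.sum_prod_type, wordGF_empty]

lemma wordGF_gapDescents_zero_succ (t g : ℕ) :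
    wordGF (gapDescents t 0 (g + 1)) =
      X * (wordGF (gapDescents (t + 1) 0 g) + wordGF (gapDescents t 0 g)) := by
  refine (wordGF_eq_ite_add _).trans ?_
  simp [gapDescents, descents, IsMotzkinPath, gapLen, Fintype.sum_prod_type, wordGF_empty]

lemma wordGF_gapDescents_succ_succ (t h g : ℕ) :
    wordGF (gapDescents (t + 1) (h + 1) g) = X * (wordGF (gapDescents t h g) +
      wordGF (gapDescents (t + 2) (h + 1) g) + wordGF (gapDescents (t + 1) (h + 1) g)) := by
  refine (wordGF_eq_ite_add _).trans ?_
  simp [gapDescents, descents, IsMotzkinPath, gapLen, Fintype.sum_prod_type, wordGF_empty,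
    add_assoc]

/-- The factors count the down step first reaching height `t`, the excursion before that step, and
the path after it. -/
lemma wordGF_descents_succ_eq_mul (t : ℕ) :
    wordGF (descents (t + 1)) = X * wordGF (descents 0) * wordGF (descents t) := by
  let f (t : ℕ) := wordGF (descents (t + 1)) - X * wordGF (descents 0) * wordGF (descents t)
  have hmem (t : ℕ) : f t ∈ Ideal.span (Set.range f) := Ideal.subset_span ⟨t, rfl⟩
  refine sub_eq_zero.1 (eq_zero_of_eq_X_mul_mem_span (f := f) (fun t => ?_) t)
  rcases t with _ | t
  · refine ⟨f 0 + f 1, add_mem (hmem 0) (hmem 1), ?_⟩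
    linear_combination wordGF_descents_succ 0 - X * wordGF (descents 0) * wordGF_descents_zero
  · refine ⟨f (t + 1) + f (t + 2) + f t,
      add_mem (add_mem (hmem (t + 1)) (hmem (t + 2))) (hmem t), ?_⟩
    linear_combination wordGF_descents_succ (t + 1) -
      X * wordGF (descents 0) * wordGF_descents_succ t

lemma wordGF_gapDescents_succ_zero_zero_eq_mul (t : ℕ) :
    wordGF (gapDescents (t + 1) 0 0) =
      X * wordGF (descents 0) * wordGF (gapDescents t 0 0) := by
  rcases t with _ | t
  · rw [wordGF_gapDescents_succ_zero_zero, wordGF_gapDescents_zero_zero_zero, mul_one]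
  · rw [wordGF_gapDescents_succ_zero_zero, wordGF_gapDescents_succ_zero_zero,
      wordGF_descents_succ_eq_mul]
    ring

/-- The factor by which a generating function changes when a gap is lengthened by one: the
additional steps are a horizontal one, or an up step together with the down step matching it and
the excursion between them. -/
noncomputable def gapFactor : ℤ⟦X⟧ := X * (1 + X * wordGF (descents 0))

lemma wordGF_gapDescents_zero_succ_eq_mul (t g : ℕ) :
    wordGF (gapDescents t 0 (g + 1)) = gapFactor * wordGF (gapDescents t 0 g) := by
  unfold gapFactor
  induction g generalizing t with
  | zero =>
    linear_combination wordGF_gapDescents_zero_succ t 0 +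
      X * wordGF_gapDescents_succ_zero_zero_eq_mul t
  | succ g ih =>
    linear_combination wordGF_gapDescents_zero_succ t (g + 1) + X * ih t + X * ih (t + 1) -
      X * (1 + X * wordGF (descents 0)) * wordGF_gapDescents_zero_succ t g

lemma wordGF_gapDescents_succ_eq_mul (h k g : ℕ) :
    wordGF (gapDescents (h + k) h (g + 1)) = gapFactor * wordGF (gapDescents (h + k) h g) := by
  induction h generalizing k with
  | zero => exact wordGF_gapDescents_zero_succ_eq_mul _ g
  | succ h ih =>
    let f (k : ℕ) := wordGF (gapDescents (h + k + 1) (h + 1) (g + 1)) -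
      gapFactor * wordGF (gapDescents (h + k + 1) (h + 1) g)
    have hmem (k : ℕ) : f k ∈ Ideal.span (Set.range f) := Ideal.subset_span ⟨k, rfl⟩
    rw [add_right_comm h 1 k]
    refine sub_eq_zero.1 (eq_zero_of_eq_X_mul_mem_span (f := f) (fun k => ?_) k)
    refine ⟨f k + f (k + 1), add_mem (hmem k) (hmem (k + 1)), ?_⟩
    linear_combination wordGF_gapDescents_succ_succ (h + k) h (g + 1) -
      gapFactor * wordGF_gapDescents_succ_succ (h + k) h g + X * ih k

lemma wordGF_gapDescents_eq_pow_mul (h g : ℕ) :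
    wordGF (gapDescents h h g) = gapFactor ^ g * wordGF (gapDescents h h 0) := by
  induction g with
  | zero => rw [pow_zero, one_mul]
  | succ g ih =>
    exact (wordGF_gapDescents_succ_eq_mul h 0 g).trans (by rw [add_zero, ih, pow_succ', mul_assoc])

end DescentGF

/-! ### Gaps and runs in words -/

section GapLen

variable {α : Type*} [DecidableEq α] {c : α} {k : ℕ} {l : List α}

lemma exists_eq_append_cons_of_lt_count (h : k < l.count c) :
    ∃ p q, l = p ++ c :: q ∧ p.count c = k := by
  induction l generalizing k with
  | nil => simp at h
  | cons x l ih =>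
    by_cases hx : x = c
    · subst hx
      rcases k with _ | k
      · exact ⟨[], l, rfl, rfl⟩
      · obtain ⟨p, q, rfl, rfl⟩ := ih (by simpa using h)
        exact ⟨x :: p, q, rfl, by simp⟩
    · obtain ⟨p, q, rfl, rfl⟩ := ih (by simpa [hx] using h)
      exact ⟨x :: p, q, rfl, by simp [hx]⟩

lemma gapLen_zero_eq_length (h : c ∉ l) : gapLen c l 0 = l.length := by
  induction l with
  | nil => rfl
  | cons x l ih => grind [gapLen]

lemma gapLen_append_cons_of_le (l' : List α) (h : k ≤ l.count c) :
    gapLen c (l ++ c :: l') k = gapLen c l k := by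
  induction l generalizing k with
  | nil => simp_all [gapLen]
  | cons x l ih => cases k <;> grind [gapLen]

lemma gapLen_append_cons_add (c : α) (k : ℕ) (l l' : List α) :
    gapLen c (l ++ c :: l') (l.count c + 1 + k) = gapLen c l' k := by
  induction l with
  | nil => simp [gapLen, add_comm 1 k]
  | cons x l ih =>
    rw [← ih, List.cons_append]
    by_cases hx : x = c
    · rw [List.count_cons, hx, beq_self_eq_true, if_pos rfl, add_right_comm, gapLen, if_pos rfl]
    · rw [List.count_cons_of_ne hx, add_right_comm, gapLen, if_neg hx]

lemma gapLen_append_singleton_of_ne {x : α} (hx : x ≠ c) (h : k ≤ l.count c) :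
    gapLen c (l ++ [x]) k = gapLen c l k + if k = l.count c then 1 else 0 := by
  induction l generalizing k with
  | nil => simp_all [gapLen]
  | cons y l ih => cases k <;> grind [gapLen]

lemma gapLen_reverse (h : k ≤ l.count c) :
    gapLen c l.reverse (l.count c - k) = gapLen c l k := by
  induction l generalizing k with
  | nil => simp_all
  | cons x l ih =>
    rw [List.reverse_cons]
    by_cases hx : x = c
    · subst hx
      rw [List.count_cons_self] at h ⊢
      rcases k with _ | k
      · simpa [gapLen] using gapLen_append_cons_add x 0 l.reverse []
      · rw [gapLen_append_cons_of_le _ (by simp), Nat.add_sub_add_right,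
          ih (Nat.le_of_succ_le_succ h), gapLen, if_pos rfl]
    · rw [List.count_cons_of_ne hx] at h ⊢
      rw [gapLen_append_singleton_of_ne hx (by simp), List.count_reverse, ih h]
      rcases k with _ | k
      · simp [gapLen, hx]
      · rw [if_neg (by lia), gapLen, if_neg hx, add_zero]

end GapLen

/-- For each occurrence of `c` in a word, whether it ends a run of `c`'s. -/
def runEnds (c : Bool) : List Bool → List Bool
  | [] => []
  | x :: w => if x = c then decide (w.head? ≠ some c) :: runEnds c w else runEnds c w

section RunEnds

variable {c : Bool} {p q w : List Bool}

lemma length_runEnds (c : Bool) (w : List Bool) : (runEnds c w).length = w.count c := by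
  induction w with
  | nil => rfl
  | cons x w ih => by_cases h : x = c <;> simp [runEnds, h, ih]

lemma drop_count_runEnds_append (c : Bool) (p q : List Bool) :
    (runEnds c (p ++ q)).drop (p.count c) = runEnds c q := by
  induction p with
  | nil => rfl
  | cons x p ih => by_cases h : x = c <;> simp [runEnds, h, ih]

lemma runEnds_append_of_head?_ne (hq : q.head? ≠ some c) :
    runEnds c (p ++ q) = runEnds c p ++ runEnds c q := by
  induction p with
  | nil => rfl
  | cons x p ih => cases p <;> grind [runEnds]

lemma eq_true_of_mem_getLast?_runEnds (c : Bool) (w : List Bool) :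
    ∀ x ∈ (runEnds c w).getLast?, x = true := by
  induction w with
  | nil => simp [runEnds]
  | cons x w ih =>
    rcases w with _ | ⟨y, w⟩
    · by_cases h : x = c <;> simp [runEnds, h]
    · rcases hr : runEnds c (y :: w) with _ | ⟨z, l⟩
      · have hy : y ≠ c := by rintro rfl; simp [runEnds] at hr
        by_cases h : x = c <;> rw [runEnds, hr] <;> simp [h, hy]
      · rw [hr] at ih
        by_cases h : x = c <;> rw [runEnds, hr] <;> simpa [h] using ih

/-- Runs of the two letters alternate. -/
lemma count_true_take_runEnds (e : Bool) (h : (p ++ e :: q).head? = some c) :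
    ((runEnds c (p ++ e :: q)).take (p.count c)).count true =
      ((runEnds (!c) (p ++ e :: q)).take (p.count (!c))).count true + if e = c then 0 else 1 := by
  induction p generalizing c with
  | nil => simp_all
  | cons x p ih =>
    obtain rfl : x = c := by simpa using h
    obtain ⟨y, hy⟩ : ∃ y, (p ++ e :: q).head? = some y := by cases p <;> simp
    have := ih hy
    cases x <;> cases y <;> cases e <;> grind [runEnds]

lemma count_true_runEnds (h : w.head? = some c) :
    (runEnds c w).count true =
      (runEnds (!c) w).count true + if w.getLast? = some c then 1 else 0 := by
  induction w generalizing c with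
  | nil => simp at h
  | cons x w ih =>
    obtain rfl : x = c := by simpa using h
    rcases w with _ | ⟨y, w⟩
    · cases x <;> simp [runEnds]
    · have := ih (c := y) rfl
      rw [List.getLast?_cons_cons]
      obtain ⟨z, hz⟩ : ∃ z, (y :: w).getLast? = some z := by simp [List.getLast?_cons]
      rw [hz] at this ⊢
      cases x <;> cases y <;> cases z <;> grind [runEnds]

lemma gapLen_zero_eq_gapLen_runEnds (h : w.head? = some (!c)) :
    gapLen c w 0 = gapLen true (runEnds (!c) w) 0 + 1 := by
  induction w with
  | nil => simp at h
  | cons x w ih =>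
    obtain rfl : x = !c := by simpa using h
    rcases w with _ | ⟨y, w⟩
    · simp [gapLen, runEnds]
    · rcases eq_or_ne y c with rfl | hy
      · simp [gapLen, runEnds]
      · obtain rfl : y = !c := Bool.eq_not.2 hy
        have hrun : runEnds (!c) ((!c) :: (!c) :: w) = false :: runEnds (!c) ((!c) :: w) := by
          simp [runEnds]
        rw [gapLen, if_neg (by simp), ih rfl, hrun, gapLen, if_neg (by simp)]

lemma runEnds_not_append_cons (c : Bool) (p q : List Bool) :
    runEnds (!c) (p ++ c :: q) = runEnds (!c) p ++ runEnds (!c) q := by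
  rw [runEnds_append_of_head?_ne (by simp)]
  simp [runEnds]

lemma count_true_runEnds_not (c : Bool) (p q : List Bool) :
    (runEnds (!c) p).count true = ((runEnds c (p ++ c :: q)).take (p.count c)).count true +
      if (p ++ c :: q).head? = some c then 0 else 1 := by
  have hp : (runEnds (!c) (p ++ c :: q)).take (p.count (!c)) = runEnds (!c) p := by
    rw [runEnds_not_append_cons, ← length_runEnds, List.take_left]
  by_cases hhead : (p ++ c :: q).head? = some c
  · simpa [hp, hhead] using (count_true_take_runEnds c hhead).symm
  · obtain ⟨z, hz⟩ : ∃ z, (p ++ c :: q).head? = some z := by cases p <;> simp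
    obtain rfl : z = !c := Bool.eq_not.2 fun hzc => hhead (hzc ▸ hz)
    rw [if_neg hhead]
    simpa [hp] using count_true_take_runEnds c hz

/-- A gap between two letters `c` that is not empty is a run of the other letter. -/
lemma gapLen_succ_eq_gapLen_runEnds {i : ℕ} (h : i + 1 < w.count c) :
    gapLen c w (i + 1) = if (runEnds c w)[i]? = some true then
      gapLen true (runEnds (!c) w)
        (((runEnds c w).take i).count true + if w.head? = some c then 0 else 1) + 1 else 0 := by
  obtain ⟨p, q, rfl, rfl⟩ := exists_eq_append_cons_of_lt_count (Nat.lt_of_succ_lt h)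
  obtain ⟨y, hy⟩ : ∃ y, q.head? = some y := by
    rcases q with _ | ⟨y, q⟩
    · simp at h
    · exact ⟨y, rfl⟩
  have hget : (runEnds c (p ++ c :: q))[p.count c]? = some (decide (y ≠ c)) := by
    rw [← List.head?_drop, drop_count_runEnds_append]
    simp [runEnds, hy]
  rw [hget, ← add_zero (p.count c + 1), gapLen_append_cons_add]
  rcases eq_or_ne y c with rfl | hyc
  · cases q <;> simp_all [gapLen]
  obtain rfl : y = !c := Bool.eq_not.2 hyc
  rw [gapLen_zero_eq_gapLen_runEnds hy, ← count_true_runEnds_not, runEnds_not_append_cons,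
    if_pos (by simp)]
  rcases List.eq_nil_or_concat (runEnds (!c) p) with hp | ⟨l, x, hp⟩
  · simp [hp]
  · obtain rfl : x = true := eq_true_of_mem_getLast?_runEnds (!c) p x (by simp [hp])
    simpa [hp] using (gapLen_append_cons_add true 0 l (runEnds (!c) q)).symm

/-- Before the `(m + 1)`-st letter `true`, as many runs of `true` as of `false` have ended, and the
ballot condition bounds the number of letters `false` in the latter runs by `m`. -/
lemma forall_prefix_count_le_iff (hw : w.head? = some true) (hlen : w.count true = w.count false)
    (hcount : (runEnds true w).count true = (runEnds false w).count true) :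
    (∀ p, p <+: w → p.count false ≤ p.count true) ↔
      ∀ m, ((runEnds true w).take m).count true ≤ ((runEnds false w).take m).count true := by
  constructor
  · intro H m
    rcases lt_or_ge m (w.count true) with hm | hm
    · obtain ⟨p, q, rfl, rfl⟩ := exists_eq_append_cons_of_lt_count hm
      have hp := count_true_take_runEnds true hw
      rw [if_pos rfl, add_zero] at hp
      rw [hp]
      exact (List.take_sublist_take_left (H p (List.prefix_append _ _))).count_le true
    · rw [List.take_of_length_le (by rwa [length_runEnds]),
        List.take_of_length_le (by rwa [length_runEnds, ← hlen]), hcount]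
  · intro H p
    induction p using List.reverseRecOn with
    | nil => simp
    | append_singleton p x ih =>
      rintro ⟨q, rfl⟩
      rw [List.append_assoc, List.singleton_append] at *
      have hle := ih (List.prefix_append _ _)
      rcases x with _ | _
      · have hp := count_true_take_runEnds false hw
        rw [if_neg (by simp)] at hp
        have hlt : p.count false ≠ p.count true := by
          intro heq
          have := H (p.count true)
          rw [hp, Bool.not_true, heq] at this
          lia
        simpa using lt_of_le_of_ne hle hlt
      · simpa using Nat.le_succ_of_le hle

end RunEnds

/-- The word starting with a run of `c`'s in which the letters `c` ending a run are marked by `a`,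
and the letters `!c` ending a run are marked by `b`, broken off when the marks of the letter to be
written next are used up. -/
def weave (c : Bool) : List Bool → List Bool → List Bool
  | [], _ => []
  | false :: a, b => c :: weave c a b
  | true :: a, b => c :: weave (!c) b a
termination_by a b => a.length + b.length

lemma weave_runEnds {c : Bool} {w : List Bool} (h : ∀ x ∈ w.head?, x = c) :
    weave c (runEnds c w) (runEnds (!c) w) = w := by
  induction w generalizing c with
  | nil => simp [runEnds, weave]
  | cons x w ih =>
    obtain rfl : x = c := by simpa using h
    by_cases hw : w.head? = some x
    · simpa [runEnds, weave, hw] using ih (c := x) (by simp [hw])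
    · have := ih (c := !x) fun y hy => Bool.eq_not.2 fun hyx => hw (hyx ▸ hy)
      simpa [runEnds, weave, hw] using this

lemma head?_weave_eq_of_ne_nil (c : Bool) {a : List Bool} (b : List Bool) (ha : a ≠ []) :
    (weave c a b).head? = some c := by
  rcases a with _ | ⟨_ | _, a⟩ <;> simp_all [weave]

lemma runEnds_weave {c : Bool} {a b : List Bool} (ha : ∀ x ∈ a.getLast?, x = true)
    (hb : ∀ x ∈ b.getLast?, x = true) (hle : b.count true ≤ a.count true)
    (hle' : a.count true ≤ b.count true + 1) :
    runEnds c (weave c a b) = a ∧ runEnds (!c) (weave c a b) = b := by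
  induction c, a, b using weave.induct with
  | case1 c b =>
    rcases List.eq_nil_or_concat b with rfl | ⟨b, x, rfl⟩
    · simp [weave, runEnds]
    · simp_all
  | case2 c a b ih =>
    have hne : a ≠ [] := by rintro rfl; simp at ha
    obtain ⟨hruns, hruns_not⟩ := ih (by rwa [List.getLast?_cons_of_ne_nil hne] at ha) hb
      (by simpa using hle) (by simpa using hle')
    simp [weave, runEnds, hruns, hruns_not, head?_weave_eq_of_ne_nil c b hne]
  | case3 c a b ih =>
    obtain ⟨hruns, hruns_not⟩ := ih hb
      (by rcases a with _ | ⟨y, a⟩ <;> simp_all [List.getLast?_cons_cons])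
      (by simpa using hle') (by simpa using hle)
    have hhead : (weave (!c) b a).head? ≠ some c := by
      rcases eq_or_ne b [] with rfl | hne
      · simp [weave]
      · simp [head?_weave_eq_of_ne_nil (!c) a hne]
    rw [Bool.not_not] at hruns_not
    simp [weave, runEnds, hruns, hruns_not, hhead]

/-! ### Dyck words as Motzkin paths -/

section Statistics

variable {c : Bool} {i : ℕ} {w : List Bool}

lemma getD_count_findIdxs_append_cons (c : Bool) (p q : List Bool) :
    ((p ++ c :: q).findIdxs (· == c)).getD (p.count c) 0 = p.length := by
  have hlen : (p.findIdxs (· == c)).length = p.count c := by simp [List.count]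
  simp [List.findIdxs_append, ← hlen, List.findIdxs_cons]

/-- Both `rStat` and `sStat` are of the form on the left. -/
lemma count_drop_take_findIdxs (h : i + 1 < w.count c) :
    ((w.take ((w.findIdxs (· == c)).getD (i + 1) 0)).drop
      ((w.findIdxs (· == c)).getD i 0 + 1)).count (!c) = gapLen c w (i + 1) := by
  obtain ⟨l, q, rfl, hl⟩ := exists_eq_append_cons_of_lt_count h
  obtain ⟨p, m, rfl, rfl⟩ := exists_eq_append_cons_of_lt_count (i.lt_succ_self.trans_eq hl.symm)
  have hm : c ∉ m := List.count_eq_zero.1 (by simpa [add_assoc] using hl)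
  have hcount : m.count (!c) = m.length :=
    List.count_eq_length.2 fun x hx => (Bool.eq_not.2 (ne_of_mem_of_not_mem hx hm)).symm
  rw [← hl, getD_count_findIdxs_append_cons, List.take_left, hl, List.append_assoc,
    List.cons_append, getD_count_findIdxs_append_cons, ← add_zero (p.count c + 1),
    gapLen_append_cons_add, gapLen_append_cons_of_le _ (Nat.zero_le _), gapLen_zero_eq_length hm,
    ← hcount]
  simp [List.drop_append, List.drop_of_length_le]

lemma rStat_eq_gapLen (h : i + 1 < w.count true) : rStat w (i + 1) = gapLen true w (i + 1) :=
  count_drop_take_findIdxs h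

lemma sStat_eq_gapLen (h : i + 1 < w.count false) : sStat w (i + 1) = gapLen false w (i + 1) :=
  count_drop_take_findIdxs h

end Statistics

section MotzkinPath

variable {t t' : ℕ} {u v w : List Step}

lemma isMotzkinPath_append :
    IsMotzkinPath t (u ++ v) t' ↔ ∃ h, IsMotzkinPath t u h ∧ IsMotzkinPath h v t' := by
  induction u generalizing t with
  | nil => simp [IsMotzkinPath]
  | cons x u ih => simp only [List.cons_append, IsMotzkinPath, ih]; tauto

lemma isMotzkinPath_reverse_map_swap :
    IsMotzkinPath t' (w.reverse.map Prod.swap) t ↔ IsMotzkinPath t w t' := by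
  induction w generalizing t with
  | nil => simp [IsMotzkinPath, eq_comm]
  | cons x w ih =>
    simp [isMotzkinPath_append, IsMotzkinPath, -List.map_reverse, ih, eq_comm, and_comm]

lemma isMotzkinPath_iff :
    IsMotzkinPath t w t' ↔ t + (w.map Prod.snd).count true = t' + (w.map Prod.fst).count true ∧
      ∀ m, ((w.map Prod.fst).take m).count true ≤ t + ((w.map Prod.snd).take m).count true := by
  induction w generalizing t with
  | nil => simp [IsMotzkinPath]
  | cons x w ih =>
    have hcons (b : Bool) (l : List Bool) : (b :: l).count true = l.count true + b.toNat := by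
      cases b <;> simp
    rw [← Nat.and_forall_add_one]
    simp only [IsMotzkinPath, ih, List.map_cons, hcons, List.take_succ_cons, List.take_zero]
    constructor
    · rintro ⟨k, hk, hcount, hle⟩
      exact ⟨by lia, by simp, fun m => by have := hle m; lia⟩
    · rintro ⟨hcount, -, hle⟩
      have h0 := hle 0
      simp only [List.take_zero, List.count_nil] at h0
      exact ⟨t + x.2.toNat - x.1.toNat, by lia, by lia, fun m => by have := hle m; lia⟩

lemma IsMotzkinPath.add_count_eq (h : IsMotzkinPath t w t') :
    t + (w.map Prod.snd).count true = t' + (w.map Prod.fst).count true :=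
  (isMotzkinPath_iff.1 h).1

end MotzkinPath

/-- The word starting with `true` in which the `i`-th letter `true`, respectively `false`, ends a
run iff the first, respectively second, component of the `i`-th step of the path `w` is `true`, and
in which the last letters `true` and `false` end a run. For paths from `0` to `0` this is a
bijection onto the Dyck words. -/
def dyckOfPath (w : List Step) : List Bool :=
  weave true (w.map Prod.fst ++ [true]) (w.map Prod.snd ++ [true])

section DyckOfPath

variable {w : List Step} {i : ℕ}

lemma head?_dyckOfPath (w : List Step) : (dyckOfPath w).head? = some true :=
  head?_weave_eq_of_ne_nil _ _ (by simp)

lemma runEnds_dyckOfPath (hw : IsMotzkinPath 0 w 0) :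
    runEnds true (dyckOfPath w) = w.map Prod.fst ++ [true] ∧
      runEnds false (dyckOfPath w) = w.map Prod.snd ++ [true] := by
  have hcount : (w.map Prod.snd).count true = (w.map Prod.fst).count true := by
    simpa using hw.add_count_eq
  exact runEnds_weave (by simp) (by simp) (by simp [hcount]) (by simp [hcount])

lemma count_dyckOfPath (hw : IsMotzkinPath 0 w 0) (c : Bool) :
    (dyckOfPath w).count c = w.length + 1 := by
  rw [← length_runEnds]
  cases c <;> simp [runEnds_dyckOfPath hw]

lemma injOn_dyckOfPath : Set.InjOn dyckOfPath {w | IsMotzkinPath 0 w 0} := by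
  intro u hu v hv huv
  have hfst := (runEnds_dyckOfPath hu).1.symm.trans (huv ▸ (runEnds_dyckOfPath hv).1)
  have hsnd := (runEnds_dyckOfPath hu).2.symm.trans (huv ▸ (runEnds_dyckOfPath hv).2)
  rw [List.zip_of_prod (List.append_cancel_right hfst) (List.append_cancel_right hsnd)]
  exact (List.zip_of_prod rfl rfl).symm

lemma forall_count_take_append_true_le_iff {a b : List Bool} (hlen : a.length = b.length) :
    (∀ m, ((a ++ [true]).take m).count true ≤ ((b ++ [true]).take m).count true) ↔
      ∀ m, (a.take m).count true ≤ (b.take m).count true := by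
  simp only [List.take_append, hlen, List.count_append, add_le_add_iff_right]

lemma isDyckWord_dyckOfPath (hw : IsMotzkinPath 0 w 0) :
    IsDyckWord (w.length + 1) (dyckOfPath w) := by
  obtain ⟨htrue, hfalse⟩ := runEnds_dyckOfPath hw
  have hcount := count_dyckOfPath hw
  have hpath := isMotzkinPath_iff.1 hw
  simp only [zero_add] at hpath
  refine ⟨?_, hcount true, hcount false, ?_⟩
  · rw [← List.count_true_add_count_false, hcount, hcount, two_mul]
  · rw [forall_prefix_count_le_iff (head?_dyckOfPath w) ((hcount true).trans (hcount false).symm)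
      (by simp [htrue, hfalse, hpath.1]), htrue, hfalse,
      forall_count_take_append_true_le_iff (by simp)]
    exact hpath.2

lemma exists_runEnds_eq_append_true {c : Bool} {D : List Bool} (h : D.count c = i + 1) :
    ∃ a, runEnds c D = a ++ [true] ∧ a.length = i := by
  have hlen := (length_runEnds c D).trans h
  rcases List.eq_nil_or_concat (runEnds c D) with hD | ⟨a, x, hD⟩
  · simp [hD] at hlen
  · obtain rfl : x = true := eq_true_of_mem_getLast?_runEnds c D x (by simp [hD])
    exact ⟨a, by simpa using hD, by simpa [hD] using hlen⟩

lemma IsDyckWord.exists_dyckOfPath_eq {N : ℕ} {D : List Bool} (hD : IsDyckWord (N + 1) D) :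
    ∃ w, w.length = N ∧ IsMotzkinPath 0 w 0 ∧ dyckOfPath w = D := by
  obtain ⟨-, htrue, hfalse, hballot⟩ := hD
  have hhead : D.head? = some true := by
    rcases D with _ | ⟨_ | _, D⟩
    · simp at htrue
    · simpa using hballot [false] (by simp)
    · rfl
  have hlast : D.getLast? ≠ some true := by
    rcases List.eq_nil_or_concat D with rfl | ⟨p, x, rfl⟩
    · simp
    · intro hx
      obtain rfl : x = true := by simpa using hx
      have := hballot p (by simp)
      simp only [List.concat_eq_append, List.count_append, List.count_singleton] at htrue hfalse
      grind
  have hcount := count_true_runEnds hhead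
  rw [if_neg hlast, add_zero, Bool.not_true] at hcount
  rw [forall_prefix_count_le_iff hhead (htrue.trans hfalse.symm) hcount] at hballot
  obtain ⟨a, ha, hlena⟩ := exists_runEnds_eq_append_true htrue
  obtain ⟨b, hb, hlenb⟩ := exists_runEnds_eq_append_true hfalse
  have hfst : (a.zip b).map Prod.fst = a := List.map_fst_zip (hlena.trans hlenb.symm).le
  have hsnd : (a.zip b).map Prod.snd = b := List.map_snd_zip (hlenb.trans hlena.symm).le
  rw [ha, hb] at hballot hcount
  refine ⟨a.zip b, by simp [hlena, hlenb], isMotzkinPath_iff.2 ⟨?_, ?_⟩, ?_⟩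
  · simpa [hfst, hsnd] using hcount.symm
  · simpa [hfst, hsnd] using
      (forall_count_take_append_true_le_iff (hlena.trans hlenb.symm)).1 hballot
  · rw [dyckOfPath, hfst, hsnd, ← ha, ← hb]
    exact weave_runEnds (by simp [hhead])

lemma rStat_dyckOfPath (hw : IsMotzkinPath 0 w 0) (hi : i < w.length) :
    rStat (dyckOfPath w) (i + 1) = if (w.map Prod.fst)[i]? = some true then
      gapLen true (w.map Prod.snd ++ [true]) (((w.map Prod.fst).take i).count true) + 1 else 0 := by
  have hlt : i + 1 < (dyckOfPath w).count true := by rw [count_dyckOfPath hw]; lia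
  rw [rStat_eq_gapLen hlt, gapLen_succ_eq_gapLen_runEnds hlt, if_pos (head?_dyckOfPath w),
    Bool.not_true, (runEnds_dyckOfPath hw).1, (runEnds_dyckOfPath hw).2,
    List.getElem?_append_left (by simpa), List.take_append_of_le_length (by simpa using hi.le),
    add_zero]

lemma sStat_dyckOfPath (hw : IsMotzkinPath 0 w 0) (hi : i < w.length) :
    sStat (dyckOfPath w) (i + 1) = if (w.map Prod.snd)[i]? = some true then
      gapLen true (w.map Prod.fst ++ [true]) (((w.map Prod.snd).take i).count true + 1) + 1
      else 0 := by
  have hlt : i + 1 < (dyckOfPath w).count false := by rw [count_dyckOfPath hw]; lia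
  have hhead : (dyckOfPath w).head? ≠ some false := by simp [head?_dyckOfPath]
  rw [sStat_eq_gapLen hlt, gapLen_succ_eq_gapLen_runEnds hlt, if_neg hhead,
    Bool.not_false, (runEnds_dyckOfPath hw).1, (runEnds_dyckOfPath hw).2,
    List.getElem?_append_left (by simpa), List.take_append_of_le_length (by simpa using hi.le)]

lemma rStat_pos_and_sStat_pos_iff (hw : IsMotzkinPath 0 w 0) (hi : i < w.length) :
    0 < rStat (dyckOfPath w) (i + 1) ∧ 0 < sStat (dyckOfPath w) (i + 1) ↔
      w[i]? = some (true, true) := by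
  rw [rStat_dyckOfPath hw hi, sStat_dyckOfPath hw hi]
  simp [hi, Prod.ext_iff, pos_iff_ne_zero]

lemma dyckOfPath_mem_dyckRS_iff (hw : IsMotzkinPath 0 w 0) (r s : ℕ) :
    dyckOfPath w ∈ dyckRS (w.length + 1) r s ↔ ∃ i, w[i]? = some (true, true) ∧
      rStat (dyckOfPath w) (i + 1) = r ∧ sStat (dyckOfPath w) (i + 1) = s ∧
      ∀ j, w[j]? = some (true, true) → j = i := by
  have hlt {j : ℕ} (hj : w[j]? = some (true, true)) : j < w.length :=
    (List.getElem?_eq_some_iff.1 hj).1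
  simp only [dyckRS, Set.mem_ofPred_eq, isDyckWord_dyckOfPath hw, true_and, Finset.mem_Icc,
    add_tsub_cancel_right]
  constructor
  · rintro ⟨i, ⟨hi, hiw⟩, hpos, hr, hs, huniq⟩
    obtain ⟨i, rfl⟩ := Nat.exists_eq_add_of_le' hi
    exact ⟨i, (rStat_pos_and_sStat_pos_iff hw hiw).1 hpos, hr, hs, fun j hj =>
      Nat.succ_injective <| huniq (j + 1) ⟨j.succ_pos, hlt hj⟩
        ((rStat_pos_and_sStat_pos_iff hw (hlt hj)).2 hj)⟩
  · rintro ⟨i, hi, hr, hs, huniq⟩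
    refine ⟨i + 1, ⟨i.succ_pos, hlt hi⟩, (rStat_pos_and_sStat_pos_iff hw (hlt hi)).2 hi, hr, hs,
      fun j ⟨hj, hjw⟩ hpos => ?_⟩
    obtain ⟨j, rfl⟩ := Nat.exists_eq_add_of_le' hj
    rw [huniq j ((rStat_pos_and_sStat_pos_iff hw hjw).1 hpos)]

end DyckOfPath

/-! ### Cutting at the step `(true, true)` -/

/-- The path consisting of `u`, read backwards, of the step `(true, true)`, and of `v`. -/
def glue (u v : List Step) : List Step :=
  u.reverse.map Prod.swap ++ (true, true) :: v

section Glue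

variable {h g i r s : ℕ} {u v w : List Step}

lemma length_glue (u v : List Step) : (glue u v).length = u.length + v.length + 1 := by
  simp [glue, add_assoc]

lemma map_fst_glue (u v : List Step) :
    (glue u v).map Prod.fst = (u.map Prod.snd).reverse ++ true :: v.map Prod.fst := by
  simp [glue, Function.comp_def]

lemma map_snd_glue (u v : List Step) :
    (glue u v).map Prod.snd = (u.map Prod.fst).reverse ++ true :: v.map Prod.snd := by
  simp [glue, Function.comp_def]

lemma getElem?_glue_length (u v : List Step) : (glue u v)[u.length]? = some (true, true) := by
  simp [glue]

lemma isMotzkinPath_glue (hu : IsMotzkinPath h u 0) (hv : IsMotzkinPath h v 0) :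
    IsMotzkinPath 0 (glue u v) 0 :=
  isMotzkinPath_append.2 ⟨h, isMotzkinPath_reverse_map_swap.2 hu, h, rfl, hv⟩

lemma exists_eq_glue (hw : IsMotzkinPath 0 w 0) (hi : w[i]? = some (true, true)) :
    ∃ h u v, w = glue u v ∧ u.length = i ∧ IsMotzkinPath h u 0 ∧ IsMotzkinPath h v 0 := by
  obtain ⟨hlt, hget⟩ := List.getElem?_eq_some_iff.1 hi
  have hsplit : w.take i ++ (true, true) :: w.drop (i + 1) = w := by rw [← hget]; simp
  obtain ⟨h, htake, k, hk, hdrop⟩ := isMotzkinPath_append.1 (hsplit ▸ hw)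
  obtain rfl : h = k := Nat.add_right_cancel hk
  refine ⟨h, (w.take i).reverse.map Prod.swap, w.drop (i + 1), ?_, by simpa using hlt.le,
    isMotzkinPath_reverse_map_swap.2 htake, hdrop⟩
  simpa [glue] using hsplit.symm

lemma glue_inj {u' v' : List Step} (hu : (true, true) ∉ u) (hv : (true, true) ∉ v) :
    glue u v = glue u' v' ↔ u = u' ∧ v = v' := by
  have hu' : (true, true) ∉ u.reverse.map Prod.swap := by simpa using hu
  rw [glue, glue, List.append_cons_inj_of_notMem hu' hv, and_iff_right rfl,
    (List.map_injective_iff.2 Prod.swap_injective).eq_iff, List.reverse_inj]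

lemma forall_getElem?_append_cons_imp_iff {α : Type*} {l m : List α} {a : α} :
    (∀ j, (l ++ a :: m)[j]? = some a → j = l.length) ↔ a ∉ l ∧ a ∉ m := by
  constructor
  · refine fun h => ⟨fun hl => ?_, fun hm => ?_⟩
    · obtain ⟨j, hj, hja⟩ := List.mem_iff_getElem.1 hl
      have hja' : (l ++ a :: m)[j]? = some a := by
        rw [List.getElem?_append_left hj, List.getElem?_eq_getElem hj, hja]
      exact hj.ne (h j hja')
    · obtain ⟨j, hja⟩ := List.mem_iff_getElem?.1 hm
      have hja' : (l ++ a :: m)[l.length + (j + 1)]? = some a := by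
        rw [List.getElem?_append_right (by lia), Nat.add_sub_cancel_left,
          List.getElem?_cons_succ, hja]
      have := h _ hja'
      lia
  · rintro ⟨hl, hm⟩ j hj
    rcases lt_trichotomy j l.length with hlt | heq | hgt
    · rw [List.getElem?_append_left hlt] at hj
      exact absurd (List.mem_of_getElem? hj) hl
    · exact heq
    · obtain ⟨k, rfl⟩ := Nat.exists_eq_add_of_lt hgt
      rw [add_assoc, List.getElem?_append_right (by lia), Nat.add_sub_cancel_left,
        List.getElem?_cons_succ] at hj
      exact absurd (List.mem_of_getElem? hj) hm

lemma forall_getElem?_glue_imp_iff :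
    (∀ j, (glue u v)[j]? = some (true, true) → j = u.length) ↔
      (true, true) ∉ u ∧ (true, true) ∉ v := by
  simpa [glue] using forall_getElem?_append_cons_imp_iff (l := u.reverse.map Prod.swap)
    (m := v) (a := (true, true))

lemma rStat_dyckOfPath_glue (hu : IsMotzkinPath h u 0) (hv : IsMotzkinPath h v 0) :
    rStat (dyckOfPath (glue u v)) (u.length + 1) = gapLen true (u.map Prod.fst) h + 1 := by
  have hcount := hu.add_count_eq
  have htake : ((glue u v).map Prod.fst).take u.length = (u.map Prod.snd).reverse := by
    rw [map_fst_glue, List.take_left' (by simp)]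
  have hle : (u.map Prod.snd).reverse.count true ≤ (u.map Prod.fst).reverse.count true := by
    rw [List.count_reverse, List.count_reverse]
    lia
  rw [rStat_dyckOfPath (isMotzkinPath_glue hu hv) (by rw [length_glue]; lia),
    if_pos (by simp [getElem?_glue_length]), htake, map_snd_glue, List.append_assoc,
    List.cons_append, gapLen_append_cons_of_le _ hle, List.count_reverse,
    ← gapLen_reverse (k := h) (by lia)]
  congr 2
  lia

lemma sStat_dyckOfPath_glue (hu : IsMotzkinPath h u 0) (hv : IsMotzkinPath h v 0) :
    sStat (dyckOfPath (glue u v)) (u.length + 1) = gapLen true (v.map Prod.fst) h + 1 := by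
  have hcount := hu.add_count_eq
  have hcount' := hv.add_count_eq
  have htake : ((glue u v).map Prod.snd).take u.length = (u.map Prod.fst).reverse := by
    rw [map_snd_glue, List.take_left' (by simp)]
  have hindex : (u.map Prod.fst).reverse.count true + 1 =
      (u.map Prod.snd).reverse.count true + 1 + h := by
    rw [List.count_reverse, List.count_reverse]
    lia
  rw [sStat_dyckOfPath (isMotzkinPath_glue hu hv) (by rw [length_glue]; lia),
    if_pos (by simp [getElem?_glue_length]), htake, map_fst_glue, List.append_assoc,
    List.cons_append, hindex, gapLen_append_cons_add, gapLen_append_cons_of_le _ (by lia)]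

lemma mem_dyckRS_iff {M : ℕ} {D : List Bool} :
    D ∈ dyckRS (M + 2) (r + 1) (s + 1) ↔ ∃ h, ∃ u ∈ gapDescents h h r, ∃ v ∈ gapDescents h h s,
      u.length + v.length = M ∧ dyckOfPath (glue u v) = D := by
  constructor
  · intro hD
    obtain ⟨w, hlen, hw, rfl⟩ := hD.1.exists_dyckOfPath_eq
    have hM : M + 2 = w.length + 1 := by rw [hlen]
    rw [hM, dyckOfPath_mem_dyckRS_iff hw] at hD
    obtain ⟨i, hi, hr, hs, huniq⟩ := hD
    obtain ⟨h, u, v, rfl, rfl, hu, hv⟩ := exists_eq_glue hw hi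
    rw [forall_getElem?_glue_imp_iff] at huniq
    rw [rStat_dyckOfPath_glue hu hv] at hr
    rw [sStat_dyckOfPath_glue hu hv] at hs
    rw [length_glue] at hlen
    exact ⟨h, u, ⟨⟨huniq.1, hu⟩, Nat.succ_injective hr⟩, v, ⟨⟨huniq.2, hv⟩, Nat.succ_injective hs⟩,
      Nat.succ_injective hlen, rfl⟩
  · rintro ⟨h, u, ⟨⟨hustar, hu⟩, hr⟩, v, ⟨⟨hvstar, hv⟩, hs⟩, rfl, rfl⟩
    have hM : u.length + v.length + 2 = (glue u v).length + 1 := by rw [length_glue]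
    rw [hM, dyckOfPath_mem_dyckRS_iff (isMotzkinPath_glue hu hv)]
    exact ⟨u.length, getElem?_glue_length u v, by rw [rStat_dyckOfPath_glue hu hv, hr],
      by rw [sStat_dyckOfPath_glue hu hv, hs], forall_getElem?_glue_imp_iff.2 ⟨hustar, hvstar⟩⟩

lemma le_length_of_mem_gapDescents (hu : u ∈ gapDescents h h g) : h ≤ u.length := by
  have hcount := hu.1.2.add_count_eq
  have hle := (u.map Prod.fst).count_le_length (a := true)
  rw [List.length_map] at hle
  lia

end Glue

section Count

open PowerSeries

lemma dyckRS_eq_image (M r s : ℕ) :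
    dyckRS (M + 2) (r + 1) (s + 1) = (fun p : List Step × List Step => dyckOfPath (glue p.1 p.2)) ''
      ⋃ h ∈ (Finset.range (M + 1) : Set ℕ),
        {p ∈ gapDescents h h r ×ˢ gapDescents h h s | p.1.length + p.2.length = M} := by
  ext D
  simp only [mem_dyckRS_iff, Set.mem_image, Set.mem_iUnion₂, Prod.exists]
  constructor
  · rintro ⟨h, u, hu, v, hv, hM, rfl⟩
    have hle := le_length_of_mem_gapDescents hu
    exact ⟨u, v, ⟨h, Finset.mem_coe.2 (Finset.mem_range.2 (by lia)), ⟨hu, hv⟩, hM⟩, rfl⟩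
  · rintro ⟨u, v, ⟨h, -, ⟨hu, hv⟩, hM⟩, rfl⟩
    exact ⟨h, u, hu, v, hv, hM, rfl⟩

lemma ncard_dyckRS_eq_coeff (M r s : ℕ) :
    ((dyckRS (M + 2) (r + 1) (s + 1)).ncard : ℤ) = coeff M (∑ h ∈ Finset.range (M + 1),
      wordGF (gapDescents h h r) * wordGF (gapDescents h h s)) := by
  have hinj : Set.InjOn (fun p : List Step × List Step => dyckOfPath (glue p.1 p.2))
      (⋃ h ∈ (Finset.range (M + 1) : Set ℕ),
        {p ∈ gapDescents h h r ×ˢ gapDescents h h s | p.1.length + p.2.length = M}) := by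
    intro p hp q hq hpq
    obtain ⟨h, -, ⟨hu, hv⟩, -⟩ := Set.mem_iUnion₂.1 hp
    obtain ⟨h', -, ⟨hu', hv'⟩, -⟩ := Set.mem_iUnion₂.1 hq
    exact Prod.ext_iff.2 <| (glue_inj hu.1.1 hv.1.1).1 <| injOn_dyckOfPath
      (isMotzkinPath_glue hu.1.2 hv.1.2) (isMotzkinPath_glue hu'.1.2 hv'.1.2) hpq
  rw [dyckRS_eq_image, hinj.ncard_image,
    (Finset.range (M + 1)).finite_toSet.ncard_biUnion, finsum_mem_coe_finset, map_sum]
  · simp only [coeff_wordGF_mul, Nat.cast_sum]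
  · exact fun h _ => finite_setOf_mem_prod_and_length_add_eq _ _ M
  · intro h _ h' _ hne
    rw [Function.onFun, Set.disjoint_left]
    rintro p ⟨⟨hu, -⟩, -⟩ ⟨⟨hu', -⟩, -⟩
    have hcount := hu.1.2.add_count_eq
    have hcount' := hu'.1.2.add_count_eq
    lia

lemma ncard_dyckRS_eq_coeff_gapFactor_pow_mul (M r s : ℕ) :
    ((dyckRS (M + 2) (r + 1) (s + 1)).ncard : ℤ) = coeff M (gapFactor ^ (r + s) *
      ∑ h ∈ Finset.range (M + 1), wordGF (gapDescents h h 0) ^ 2) := by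
  rw [ncard_dyckRS_eq_coeff, Finset.mul_sum]
  congr 1
  refine Finset.sum_congr rfl fun h _ => ?_
  rw [wordGF_gapDescents_eq_pow_mul h r, wordGF_gapDescents_eq_pow_mul h s]
  ring

end Count

/-- **Remark.** `|𝒟ₙ^{r,s}|` depends only on `r + s`: for `r, s, r', s' ≥ 1` with
`r + s = r' + s'` and `n ≥ r + s`, `|𝒟ₙ^{r,s}| = |𝒟ₙ^{r',s'}|`. -/
theorem dyckRS_count_depends_on_sum (r s r' s' n : ℕ) (hr : 1 ≤ r) (hs : 1 ≤ s)
    (hr' : 1 ≤ r') (hs' : 1 ≤ s') (hsum : r + s = r' + s') (hn : r + s ≤ n) :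
    (dyckRS n r s).ncard = (dyckRS n r' s').ncard := by
  obtain ⟨r, rfl⟩ := Nat.exists_eq_add_of_le' hr
  obtain ⟨s, rfl⟩ := Nat.exists_eq_add_of_le' hs
  obtain ⟨r', rfl⟩ := Nat.exists_eq_add_of_le' hr'
  obtain ⟨s', rfl⟩ := Nat.exists_eq_add_of_le' hs'
  obtain ⟨M, rfl⟩ : ∃ M, n = M + 2 := Nat.exists_eq_add_of_le' (by lia)
  have hsum' : r + s = r' + s' := by lia
  rw [← Nat.cast_inj (R := ℤ), ncard_dyckRS_eq_coeff_gapFactor_pow_mul,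
    ncard_dyckRS_eq_coeff_gapFactor_pow_mul, hsum']
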